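/- Let 2 < p < 6, 2 < q < 4 and μ > 0. Then there exists a ground state of F_{p,q} at mass μ, i.e. a function u ∈ H¹(ℝ) with ‖u‖₂² = μ such that F_{p,q}(u) ≤ F_{p,q}(v) for every v ∈ H¹(ℝ) with ‖v‖₂² = μ. -/

import Mathlib

open MeasureTheory Real Set

noncomputable section

/-- `u ∈ H¹(ℝ)` with weak derivative `u'`: `u` is continuous, square-integrable,
`u'` is square-integrable, and `u(b) − u(a) = ∫_a^b u'(t) dt` for all `a ≤ b`. -/
def IsH1 (u u' : ℝ → ℝ) : Prop :=
  Continuous u ∧ Integrable (fun x => (u x) ^ 2) ∧ Integrable (fun x => (u' x) ^ 2) ∧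
    ∀ a b : ℝ, a ≤ b → u b - u a = ∫ t in a..b, u' t

/-- The mass `‖u‖₂² = ∫_ℝ u(x)² dx`. -/
def mass (u : ℝ → ℝ) : ℝ := ∫ x, (u x) ^ 2

/-- `D_q(u) = (1/2)∫ u'² − (1/q)|u(0)|^q`. -/
def Dfun (q : ℝ) (u u' : ℝ → ℝ) : ℝ :=
  (1 / 2) * (∫ x, (u' x) ^ 2) - (1 / q) * |u 0| ^ q

/-- `F_{p,q}(u) = (1/2)∫ u'² − (1/p)∫ |u|^p − (1/q)|u(0)|^q`. -/
def Ffun (p q : ℝ) (u u' : ℝ → ℝ) : ℝ :=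
  (1 / 2) * (∫ x, (u' x) ^ 2) - (1 / p) * (∫ x, |u x| ^ p) - (1 / q) * |u 0| ^ q

/-!
Concentration-compactness. By the Gagliardo–Nirenberg inequality `F_{p,q}` is coercive on functions
of mass `μ`, so a minimizing sequence `u n` has a weakly convergent subsequence in `H¹(ℝ)`, and
dilations show that the infimum `E` is negative. Moving a near-maximum of `|u n|` to the origin does
not raise the energy and prevents vanishing: if the weak limit `v` were zero at the origin, then
`u n → 0` uniformly, the potential terms would vanish, and `E` would be nonnegative. Mass and energy
split asymptotically between `v` and `u n - v`, for the `Lᵖ` term by the Brezis–Lieb lemma.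
Rescaling a function of mass `m ≤ μ` to mass `μ` shows that its energy is at least `(m / μ) E`,
strictly more if it is nonzero and `m < μ`. Applied to `u n - v` in the limit this gives
`F_{p,q}(v) ≤ (mass v / μ) E`, and applied to `v` it then leaves only `mass v = μ`.
-/

open Filter Topology

section RealInequalities

lemma exists_mul_rpow_le_add {α A ε : ℝ} (hα0 : 0 ≤ α) (hα1 : α < 1) (hA : 0 ≤ A) (hε : 0 < ε) :
    ∃ C, ∀ t, 0 ≤ t → A * t ^ α ≤ ε * t + C := by
  set c := (A / ε) ^ (1 - α)⁻¹
  have hc : 0 ≤ c := by positivity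
  have hcA : c ^ (1 - α) = A / ε := rpow_inv_rpow (by positivity) (by linarith)
  refine ⟨ε * c, fun t ht => ?_⟩
  have young : t ^ α * c ^ (1 - α) ≤ α * t + (1 - α) * c :=
    geom_mean_le_arith_mean2_weighted hα0 (by linarith) ht hc (by ring)
  calc A * t ^ α = ε * (t ^ α * c ^ (1 - α)) := by rw [hcA]; field_simp
    _ ≤ ε * (t + c) := by gcongr; nlinarith
    _ = ε * t + ε * c := by ring

lemma abs_rpow_le_mul_sq {c p t : ℝ} (hp : 2 ≤ p) (ht : |t| ≤ c) :
    |t| ^ p ≤ c ^ (p - 2) * t ^ 2 :=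
  calc |t| ^ p = |t| ^ (p - 2) * |t| ^ (2 : ℝ) := by
        rw [← rpow_add_of_nonneg (abs_nonneg t) (by linarith) zero_le_two, sub_add_cancel]
    _ = |t| ^ (p - 2) * t ^ 2 := by rw [rpow_two, sq_abs]
    _ ≤ c ^ (p - 2) * t ^ 2 := by gcongr

end RealInequalities

section BrezisLieb

variable {E : Type*} [SeminormedAddCommGroup E] {p : ℝ}

lemma norm_add_rpow_le (hp : 1 ≤ p) {t : ℝ} (ht0 : 0 < t) (ht1 : t < 1) (a b : E) :
    ‖a + b‖ ^ p ≤ (1 - t) ^ (1 - p) * ‖a‖ ^ p + t ^ (1 - p) * ‖b‖ ^ p := by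
  have mul_div_rpow : ∀ s r : ℝ, 0 < s → 0 ≤ r → s * (r / s) ^ p = s ^ (1 - p) * r ^ p := by
    intro s r hs hr
    rw [div_rpow hr hs.le, rpow_sub hs, rpow_one]
    ring
  have ht : 0 < 1 - t := by linarith
  calc ‖a + b‖ ^ p ≤ (‖a‖ + ‖b‖) ^ p := by gcongr; exact norm_add_le a b
    _ = ((1 - t) * (‖a‖ / (1 - t)) + t * (‖b‖ / t)) ^ p := by congr 1; field_simp
    _ ≤ (1 - t) * (‖a‖ / (1 - t)) ^ p + t * (‖b‖ / t) ^ p :=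
        (convexOn_rpow hp).2 (mem_Ici.2 (by positivity)) (mem_Ici.2 (by positivity)) ht.le ht0.le
          (by ring)
    _ = _ := by rw [mul_div_rpow _ _ ht (norm_nonneg a), mul_div_rpow _ _ ht0 (norm_nonneg b)]

lemma exists_abs_norm_add_rpow_sub_le (E : Type*) [SeminormedAddCommGroup E] (hp : 1 ≤ p) {ε : ℝ}
    (hε : 0 < ε) :
    ∃ C, ∀ a b : E, |‖a + b‖ ^ p - ‖a‖ ^ p| ≤ ε * ‖a‖ ^ p + C * ‖b‖ ^ p := by
  have lim_near_zero : ∀ r : ℝ, Tendsto (fun t : ℝ => (1 - t) ^ r) (𝓝[>] 0) (𝓝 1) := by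
    intro r
    have : ContinuousAt (fun t : ℝ => (1 - t) ^ r) 0 :=
      (by fun_prop : ContinuousAt (fun t : ℝ => 1 - t) 0).rpow_const (Or.inl (by norm_num))
    simpa using this.tendsto.mono_left nhdsWithin_le_nhds
  obtain ⟨t, hup, hlow, ht0, ht1⟩ :=
    (((lim_near_zero (1 - p)).eventually_lt_const (by linarith : 1 < 1 + ε)).and
      (((lim_near_zero (p - 1)).eventually_const_lt (by linarith : 1 - ε < 1)).and
        (Ioo_mem_nhdsGT zero_lt_one))).exists
  have hs : 0 < 1 - t := by linarith
  have hinv : (1 - t) ^ (p - 1) * (1 - t) ^ (1 - p) = 1 := by rw [← rpow_add hs]; simp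
  have hle_one : (1 - t) ^ (p - 1) ≤ 1 := rpow_le_one hs.le (by linarith) (by linarith)
  refine ⟨t ^ (1 - p), fun a b => ?_⟩
  have ha : 0 ≤ ‖a‖ ^ p := by positivity
  have hb : 0 ≤ t ^ (1 - p) * ‖b‖ ^ p := by positivity
  have upper := norm_add_rpow_le hp ht0 ht1 a b
  have lower : (1 - t) ^ (p - 1) * ‖a‖ ^ p ≤ ‖a + b‖ ^ p + t ^ (1 - p) * ‖b‖ ^ p := by
    have h := norm_add_rpow_le hp ht0 ht1 (a + b) (-b)
    rw [add_neg_cancel_right, norm_neg] at h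
    calc (1 - t) ^ (p - 1) * ‖a‖ ^ p
        ≤ (1 - t) ^ (p - 1) * ((1 - t) ^ (1 - p) * ‖a + b‖ ^ p + t ^ (1 - p) * ‖b‖ ^ p) := by
          gcongr
      _ = ‖a + b‖ ^ p + (1 - t) ^ (p - 1) * (t ^ (1 - p) * ‖b‖ ^ p) := by
          rw [mul_add, ← mul_assoc, hinv, one_mul]
      _ ≤ ‖a + b‖ ^ p + t ^ (1 - p) * ‖b‖ ^ p := by
          linarith [mul_le_of_le_one_left hb hle_one]
  rw [abs_le]
  constructor <;> nlinarith

variable {α : Type*} [MeasurableSpace α] {μ : Measure α} {ι : Type*} {l : Filter ι}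
  [l.IsCountablyGenerated]

lemma tendsto_integral_zero_of_norm_le_mul_add {G : Type*} [NormedAddCommGroup G] [NormedSpace ℝ G]
    {F : ι → α → G} {a : ι → α → ℝ} {B : ℝ} (hF : ∀ n, AEStronglyMeasurable (F n) μ)
    (ha : ∀ n, Integrable (a n) μ) (ha0 : ∀ n x, 0 ≤ a n x) (haB : ∀ n, ∫ x, a n x ∂μ ≤ B)
    (hlim : ∀ᵐ x ∂μ, Tendsto (F · x) l (𝓝 0))
    (hle : ∀ ε > 0, ∃ g : α → ℝ, Integrable g μ ∧ ∀ n x, ‖F n x‖ ≤ ε * a n x + g x) :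
    Tendsto (fun n => ∫ x, F n x ∂μ) l (𝓝 0) := by
  refine Metric.tendsto_nhds.2 fun δ hδ => ?_
  obtain ⟨ε, hε, hεB⟩ : ∃ ε > 0, ε * B < δ :=
    ⟨δ / (|B| + 1), by positivity, by
      rw [div_mul_eq_mul_div, div_lt_iff₀ (by positivity)]
      nlinarith [le_abs_self B]⟩
  obtain ⟨g, hg, hFg⟩ := hle ε hε
  let excess : ι → α → ℝ := fun n x => max (‖F n x‖ - ε * a n x) 0
  have excess_meas : ∀ n, AEStronglyMeasurable (excess n) μ := fun n =>
    ((hF n).norm.sub ((ha n).1.const_mul ε)).sup aestronglyMeasurable_const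
  have excess_le : ∀ n x, ‖excess n x‖ ≤ |g x| := fun n x => by
    rw [norm_of_nonneg (le_max_right _ _)]
    exact max_le (by linarith [hFg n x, le_abs_self (g x)]) (abs_nonneg _)
  have excess_lim : Tendsto (fun n => ∫ x, excess n x ∂μ) l (𝓝 0) := by
    rw [← integral_zero α ℝ (μ := μ)]
    refine tendsto_integral_filter_of_dominated_convergence (fun x => |g x|)
      (Eventually.of_forall excess_meas)
      (Eventually.of_forall fun n => Eventually.of_forall (excess_le n)) hg.abs ?_
    filter_upwards [hlim] with x hx
    refine squeeze_zero (fun n => le_max_right _ _) (fun n => ?_) (tendsto_norm_zero.comp hx)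
    exact max_le (by simpa using mul_nonneg hε.le (ha0 n x)) (norm_nonneg _)
  filter_upwards [(excess_lim.add_const (ε * B)).eventually_lt_const
    (by rwa [zero_add] : 0 + ε * B < δ)] with n hn
  have excess_int : Integrable (excess n) μ :=
    hg.abs.mono' (excess_meas n) (Eventually.of_forall (excess_le n))
  rw [dist_zero_right]
  calc ‖∫ x, F n x ∂μ‖ ≤ ∫ x, (excess n x + ε * a n x) ∂μ :=
        norm_integral_le_of_norm_le (excess_int.add ((ha n).const_mul ε))
          (Eventually.of_forall fun x => sub_le_iff_le_add.1 (le_max_left _ _))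
    _ = ∫ x, excess n x ∂μ + ε * ∫ x, a n x ∂μ := by
        rw [integral_add excess_int ((ha n).const_mul ε), integral_const_mul]
    _ ≤ ∫ x, excess n x ∂μ + ε * B := by gcongr; exact haB n
    _ < δ := hn

/-- The **Brezis–Lieb lemma**. -/
theorem tendsto_integral_norm_rpow_sub_norm_sub_rpow {E : Type*} [NormedAddCommGroup E] (hp : 1 ≤ p)
    {f : ι → α → E} {g : α → E} {B : ℝ} (hf : ∀ n, AEStronglyMeasurable (f n) μ)
    (hg : AEStronglyMeasurable g μ) (hfp : ∀ n, Integrable (fun x => ‖f n x‖ ^ p) μ)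
    (hgp : Integrable (fun x => ‖g x‖ ^ p) μ) (hfB : ∀ n, ∫ x, ‖f n x‖ ^ p ∂μ ≤ B)
    (hlim : ∀ᵐ x ∂μ, Tendsto (f · x) l (𝓝 (g x))) :
    Tendsto (fun n => ∫ x, ‖f n x‖ ^ p ∂μ - ∫ x, ‖f n x - g x‖ ^ p ∂μ) l
      (𝓝 (∫ x, ‖g x‖ ^ p ∂μ)) := by
  have hp0 : 0 ≤ p := by linarith
  have sub_le : ∀ ε > 0, ∃ C, ∀ a b : E, |‖a‖ ^ p - ‖a - b‖ ^ p| ≤ ε * ‖a‖ ^ p + C * ‖b‖ ^ p := by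
    intro ε hε
    obtain ⟨C, hC⟩ := exists_abs_norm_add_rpow_sub_le E hp hε
    exact ⟨C, fun a b => by simpa [abs_sub_comm, ← sub_eq_add_neg] using hC a (-b)⟩
  have meas : ∀ n, AEStronglyMeasurable (fun x => ‖f n x - g x‖ ^ p) μ := fun n =>
    (((hf n).sub hg).norm.aemeasurable.pow_const p).aestronglyMeasurable
  have int_diff : ∀ n, Integrable (fun x => ‖f n x‖ ^ p - ‖f n x - g x‖ ^ p) μ := fun n => by
    obtain ⟨C, hC⟩ := sub_le 1 one_pos
    exact (((hfp n).const_mul 1).add (hgp.const_mul C)).mono' ((hfp n).1.sub (meas n))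
      (Eventually.of_forall fun x => hC (f n x) (g x))
  have int_sub : ∀ n, Integrable (fun x => ‖f n x - g x‖ ^ p) μ := fun n => by
    simpa only [sub_sub_cancel] using (hfp n).sub' (int_diff n)
  have defect_lim : Tendsto (fun n => ∫ x, (‖f n x‖ ^ p - ‖f n x - g x‖ ^ p - ‖g x‖ ^ p) ∂μ) l
      (𝓝 0) := by
    refine tendsto_integral_zero_of_norm_le_mul_add (fun n => ((int_diff n).sub hgp).1) hfp
      (fun n x => by positivity) hfB ?_ fun ε hε => ?_
    · filter_upwards [hlim] with x hx
      have hsub : Tendsto (fun n => ‖f n x - g x‖) l (𝓝 0) := by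
        simpa using (hx.sub_const (g x)).norm
      simpa [zero_rpow (by linarith : p ≠ 0)] using
        ((hx.norm.rpow_const (Or.inr hp0)).sub (hsub.rpow_const (Or.inr hp0))).sub_const (‖g x‖ ^ p)
    · obtain ⟨C, hC⟩ := sub_le ε hε
      refine ⟨fun x => C * ‖g x‖ ^ p + ‖g x‖ ^ p, (hgp.const_mul C).add hgp, fun n x => ?_⟩
      have hgx : |‖g x‖ ^ p| = ‖g x‖ ^ p := abs_of_nonneg (by positivity)
      calc _ ≤ |‖f n x‖ ^ p - ‖f n x - g x‖ ^ p| + |‖g x‖ ^ p| := abs_sub _ _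
        _ ≤ ε * ‖f n x‖ ^ p + (C * ‖g x‖ ^ p + ‖g x‖ ^ p) := by
            rw [hgx, ← add_assoc]; gcongr; exact hC _ _
  rw [← zero_add (∫ x, ‖g x‖ ^ p ∂μ)]
  refine (defect_lim.add_const _).congr fun n => ?_
  rw [integral_sub (int_diff n) hgp, integral_sub (hfp n) (int_sub n), sub_add_cancel]

end BrezisLieb

section WeakCompactness

lemma exists_subseq_tendsto_inner {H : Type*} [NormedAddCommGroup H] [InnerProductSpace ℝ H]
    [CompleteSpace H] [TopologicalSpace.SeparableSpace H] {x : ℕ → H} {R : ℝ}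
    (hx : ∀ n, ‖x n‖ ≤ R) :
    ∃ (y : H) (φ : ℕ → ℕ), StrictMono φ ∧
      ∀ z, Tendsto (fun n => inner ℝ (x (φ n)) z) atTop (𝓝 (inner ℝ y z)) := by
  let toWeak : H → WeakDual ℝ H := fun z => StrongDual.toWeakDual (InnerProductSpace.toDual ℝ H z)
  have hmem : ∀ n, toWeak (x n) ∈
      WeakDual.toStrongDual ⁻¹' Metric.closedBall (0 : StrongDual ℝ H) R := fun n =>
    mem_closedBall_zero_iff.2 (((InnerProductSpace.toDual ℝ H).norm_map (x n)).trans_le (hx n))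
  obtain ⟨a, -, φ, hφ, hlim⟩ := WeakDual.isSeqCompact_closedBall ℝ H 0 R hmem
  refine ⟨(InnerProductSpace.toDual ℝ H).symm (WeakDual.toStrongDual a), φ, hφ, fun z => ?_⟩
  rw [InnerProductSpace.toDual_symm_apply]
  exact ((WeakDual.eval_continuous z).tendsto a).comp hlim

lemma inner_toLp_toLp {α : Type*} [MeasurableSpace α] {μ : Measure α} {f g : α → ℝ}
    (hf : MemLp f 2 μ) (hg : MemLp g 2 μ) :
    inner ℝ (hf.toLp f) (hg.toLp g) = ∫ x, f x * g x ∂μ := by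
  rw [L2.inner_def]
  refine integral_congr_ae ?_
  filter_upwards [hf.coeFn_toLp, hg.coeFn_toLp] with x hfx hgx
  simp [hfx, hgx, mul_comm]

lemma exists_subseq_tendsto_integral_mul {α : Type*} [MeasurableSpace α] {μ : Measure α}
    [IsSeparable μ] {f : ℕ → α → ℝ} {B : ℝ} (hf : ∀ n, MemLp (f n) 2 μ)
    (hB : ∀ n, ∫ x, f n x ^ 2 ∂μ ≤ B) :
    ∃ (g : α → ℝ) (φ : ℕ → ℕ), MemLp g 2 μ ∧ StrictMono φ ∧ ∀ h, MemLp h 2 μ →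
      Tendsto (fun n => ∫ x, f (φ n) x * h x ∂μ) atTop (𝓝 (∫ x, g x * h x ∂μ)) := by
  have norm_le : ∀ n, ‖(hf n).toLp (f n)‖ ≤ √B := fun n => by
    refine le_sqrt_of_sq_le ?_
    rw [← real_inner_self_eq_norm_sq, inner_toLp_toLp]
    simpa only [sq] using hB n
  have : Fact ((2 : ENNReal) ≠ ⊤) := ⟨ENNReal.ofNat_ne_top⟩
  obtain ⟨G, φ, hφ, hlim⟩ := exists_subseq_tendsto_inner norm_le
  refine ⟨G, φ, Lp.memLp G, hφ, fun h hh => ?_⟩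
  simpa only [← inner_toLp_toLp (Lp.memLp G) hh, ← inner_toLp_toLp (hf _) hh, Lp.toLp_coeFn]
    using hlim (hh.toLp h)

end WeakCompactness

section L2

variable {α : Type*} [MeasurableSpace α] {μ : Measure α} {f g : α → ℝ} {s : Set α}

lemma sq_integral_mul_le (hf : MemLp f 2 μ) (hg : MemLp g 2 μ) :
    (∫ x, f x * g x ∂μ) ^ 2 ≤ (∫ x, f x ^ 2 ∂μ) * ∫ x, g x ^ 2 ∂μ := by
  have h := real_inner_mul_inner_self_le (hf.toLp f) (hg.toLp g)
  simpa only [inner_toLp_toLp, ← sq] using h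

lemma integral_mul_indicator_one (hs : MeasurableSet s) :
    ∫ x, f x * s.indicator 1 x ∂μ = ∫ x in s, f x ∂μ := by
  rw [← integral_indicator hs]
  simp only [← indicator_mul_right, Pi.one_apply, mul_one]

lemma memLp_indicator_one (hs : MeasurableSet s) (hμs : μ s ≠ ⊤) :
    MemLp (s.indicator (1 : α → ℝ)) 2 μ :=
  memLp_indicator_const 2 hs 1 (Or.inr hμs)

lemma sq_setIntegral_le (hf : MemLp f 2 μ) (hs : MeasurableSet s) (hμs : μ s ≠ ⊤) :
    (∫ x in s, f x ∂μ) ^ 2 ≤ μ.real s * ∫ x, f x ^ 2 ∂μ := by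
  have indicator_sq : ∀ x, s.indicator (1 : α → ℝ) x ^ 2 = s.indicator 1 x := fun x => by
    by_cases hx : x ∈ s <;> simp [hx]
  have h := sq_integral_mul_le hf (memLp_indicator_one hs hμs)
  simp only [integral_mul_indicator_one hs, indicator_sq, integral_indicator_one hs] at h
  rwa [mul_comm]

end L2

section SobolevSpace

lemma exists_forall_not_intervalIntegrable {E : Type*} [NormedAddCommGroup E] {f : ℝ → E}
    {μ : Measure ℝ} (hf : ¬AEStronglyMeasurable f μ) :
    ∃ x, ∀ a < x, ∀ b > x, ¬IntervalIntegrable f μ a b := by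
  have not_loc : ¬LocallyIntegrable f μ := fun h => hf h.aestronglyMeasurable
  simp only [LocallyIntegrable, not_forall] at not_loc
  obtain ⟨x, hx⟩ := not_loc
  exact ⟨x, fun a ha b hb hab => hx ⟨Ioo a b, Ioo_mem_nhds ha hb,
    ((intervalIntegrable_iff_integrableOn_Ioc_of_le (ha.trans hb).le).1 hab).mono_set
      Ioo_subset_Ioc_self⟩⟩

/-- Membership in the Sobolev space `H¹(ℝ)`, with weak derivative `u'`. In contrast to `IsH1`, the
derivative is required to be a.e. strongly measurable, as part of `MemLp u' 2`. -/
structure MemH1 (u u' : ℝ → ℝ) : Prop where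
  continuous : Continuous u
  memLp : MemLp u 2
  memLp_deriv : MemLp u' 2
  sub_eq_integral : ∀ a b : ℝ, u b - u a = ∫ t in a..b, u' t

lemma MemH1.isH1 {u u' : ℝ → ℝ} (h : MemH1 u u') : IsH1 u u' :=
  ⟨h.continuous, h.memLp.integrable_sq, h.memLp_deriv.integrable_sq,
    fun a b _ => h.sub_eq_integral a b⟩

-- The integral of a non-integrable function is the junk value `0`, so a non-measurable `u'` can
-- satisfy `IsH1 u u'`; but then `u` is constant near a bad point of `u'`, hence everywhere.
lemma IsH1.aestronglyMeasurable_deriv {u u' : ℝ → ℝ} (h : IsH1 u u') (hu : mass u ≠ 0) :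
    AEStronglyMeasurable u' := by
  obtain ⟨-, hu2, -, hsub⟩ := h
  by_contra hmeas
  obtain ⟨x, hx⟩ := exists_forall_not_intervalIntegrable hmeas
  have eq_across : ∀ a < x, ∀ b > x, u a = u b := fun a ha b hb => by
    have h := hsub a b (ha.trans hb).le
    rw [intervalIntegral.integral_undef (hx a ha b hb)] at h
    linarith
  have ae_const : (fun y => u y ^ 2) =ᵐ[volume] fun _ => u (x + 1) ^ 2 := by
    filter_upwards [Measure.ae_ne volume x] with y hy
    rcases lt_or_gt_of_ne hy with hlt | hgt
    · rw [eq_across y hlt (x + 1) (by linarith)]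
    · rw [← eq_across (x - 1) (by linarith) y hgt, eq_across (x - 1) (by linarith) (x + 1)
        (by linarith)]
  have const_zero : u (x + 1) ^ 2 = 0 := by
    simpa [integrable_const_iff, isFiniteMeasure_iff] using hu2.congr ae_const
  exact hu (by rw [mass, integral_congr_ae ae_const, const_zero, integral_zero])

lemma IsH1.memH1 {u u' : ℝ → ℝ} (h : IsH1 u u') (hu : mass u ≠ 0) : MemH1 u u' := by
  have hmeas := h.aestronglyMeasurable_deriv hu
  obtain ⟨hcont, hu2, hu2', hsub⟩ := h
  refine ⟨hcont, (memLp_two_iff_integrable_sq hcont.aestronglyMeasurable).2 hu2,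
    (memLp_two_iff_integrable_sq hmeas).2 hu2', fun a b => ?_⟩
  rcases le_total a b with hab | hba
  · exact hsub a b hab
  · rw [intervalIntegral.integral_symm, ← hsub b a hba, neg_sub]

variable {u u' v v' : ℝ → ℝ}

lemma MemH1.intervalIntegrable_deriv (h : MemH1 u u') (a b : ℝ) :
    IntervalIntegrable u' volume a b :=
  ((h.memLp_deriv.locallyIntegrable one_le_two).integrableOn_isCompact
    isCompact_uIcc).intervalIntegrable

lemma MemH1.sub (hu : MemH1 u u') (hv : MemH1 v v') : MemH1 (u - v) (u' - v') where
  continuous := hu.continuous.sub hv.continuous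
  memLp := hu.memLp.sub hv.memLp
  memLp_deriv := hu.memLp_deriv.sub hv.memLp_deriv
  sub_eq_integral a b := by
    simp only [Pi.sub_apply]
    rw [intervalIntegral.integral_sub (hu.intervalIntegrable_deriv a b)
      (hv.intervalIntegrable_deriv a b), ← hu.sub_eq_integral, ← hv.sub_eq_integral]
    ring

lemma MemH1.const_smul (hu : MemH1 u u') (s : ℝ) : MemH1 (s • u) (s • u') where
  continuous := hu.continuous.const_smul s
  memLp := hu.memLp.const_smul s
  memLp_deriv := hu.memLp_deriv.const_smul s
  sub_eq_integral a b := by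
    simp only [Pi.smul_apply, intervalIntegral.integral_smul, ← hu.sub_eq_integral, smul_sub]

lemma MemH1.comp_add_right (hu : MemH1 u u') (y : ℝ) :
    MemH1 (fun x => u (x + y)) (fun x => u' (x + y)) where
  continuous := hu.continuous.comp (continuous_add_const y)
  memLp := hu.memLp.comp_measurePreserving (measurePreserving_add_right volume y)
  memLp_deriv := hu.memLp_deriv.comp_measurePreserving (measurePreserving_add_right volume y)
  sub_eq_integral a b := by
    rw [intervalIntegral.integral_comp_add_right, ← hu.sub_eq_integral]

lemma memLp_two_comp_mul_left {f : ℝ → ℝ} (hf : MemLp f 2) {s : ℝ} (hs : s ≠ 0) :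
    MemLp (fun x => f (s * x)) 2 := by
  have hmeas : AEStronglyMeasurable (fun x => f (s * x)) :=
    hf.1.comp_quasiMeasurePreserving (Measure.quasiMeasurePreserving_smul volume hs)
  exact (memLp_two_iff_integrable_sq hmeas).2 (hf.integrable_sq.comp_mul_left' hs)

lemma MemH1.comp_mul_left (hu : MemH1 u u') {s : ℝ} (hs : s ≠ 0) :
    MemH1 (fun x => u (s * x)) (fun x => s * u' (s * x)) where
  continuous := hu.continuous.comp (continuous_const_mul s)
  memLp := memLp_two_comp_mul_left hu.memLp hs
  memLp_deriv := (memLp_two_comp_mul_left hu.memLp_deriv hs).const_mul s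
  sub_eq_integral a b := by
    rw [intervalIntegral.integral_const_mul, intervalIntegral.mul_integral_comp_mul_left,
      ← hu.sub_eq_integral]

lemma mass_nonneg (u : ℝ → ℝ) : 0 ≤ mass u := integral_nonneg fun x => sq_nonneg (u x)

lemma mass_const_smul (s : ℝ) (u : ℝ → ℝ) : mass (s • u) = s ^ 2 * mass u := by
  simp only [mass, Pi.smul_apply, smul_eq_mul, mul_pow, integral_const_mul]

lemma mass_comp_add_right (u : ℝ → ℝ) (y : ℝ) : mass (fun x => u (x + y)) = mass u :=
  integral_add_right_eq_self (fun x => u x ^ 2) y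

lemma mass_comp_mul_left (u : ℝ → ℝ) (s : ℝ) : mass (fun x => u (s * x)) = |s⁻¹| * mass u :=
  Measure.integral_comp_mul_left (fun x => u x ^ 2) s

lemma MemH1.mass_pos (hu : MemH1 u u') {x : ℝ} (hx : u x ≠ 0) : 0 < mass u :=
  integral_pos_of_integrable_nonneg_nonzero (hu.continuous.pow 2) hu.memLp.integrable_sq
    (fun y => sq_nonneg (u y)) (pow_ne_zero 2 hx)

lemma MemH1.sq_sub_le (hu : MemH1 u u') {a b : ℝ} (hab : a ≤ b) :
    (u b - u a) ^ 2 ≤ (b - a) * mass u' := by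
  rw [hu.sub_eq_integral, intervalIntegral.integral_of_le hab, ← Real.volume_real_Ioc_of_le hab]
  exact sq_setIntegral_le hu.memLp_deriv measurableSet_Ioc measure_Ioc_lt_top.ne

lemma MemH1.sq_mul_le (hu : MemH1 u u') {L : ℝ} (hL : 0 ≤ L) (x : ℝ) :
    u x ^ 2 * L ≤ 2 * mass u' * (L * L) + 2 * mass u := by
  have hle : x ≤ x + L := by linarith
  have pointwise : ∀ y ∈ Icc x (x + L), u x ^ 2 ≤ 2 * u y ^ 2 + 2 * L * mass u' := fun y hy => by
    have hyL : (y - x) * mass u' ≤ L * mass u' :=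
      mul_le_mul_of_nonneg_right (by linarith [hy.2]) (mass_nonneg u')
    nlinarith [hu.sq_sub_le hy.1, sq_nonneg (u x - 2 * u y)]
  have int_sq : IntervalIntegrable (fun y => 2 * u y ^ 2) volume x (x + L) :=
    hu.memLp.integrable_sq.intervalIntegrable.const_mul 2
  calc u x ^ 2 * L = ∫ _ in x..x + L, u x ^ 2 := by simp [mul_comm]
    _ ≤ ∫ y in x..x + L, (2 * u y ^ 2 + 2 * L * mass u') :=
        intervalIntegral.integral_mono_on hle (by simp) (int_sq.add (by simp)) pointwise
    _ = 2 * mass u' * (L * L) + 2 * ∫ y in x..x + L, u y ^ 2 := by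
        rw [intervalIntegral.integral_add int_sq (by simp), intervalIntegral.integral_const_mul,
          intervalIntegral.integral_const, smul_eq_mul]
        ring
    _ ≤ 2 * mass u' * (L * L) + 2 * mass u := by
        rw [intervalIntegral.integral_of_le hle]
        gcongr
        exact setIntegral_le_integral hu.memLp.integrable_sq
          (Eventually.of_forall fun y => sq_nonneg (u y))

lemma MemH1.pow_four_le (hu : MemH1 u u') (x : ℝ) : u x ^ 4 ≤ 16 * (mass u * mass u') := by
  have quadratic_nonneg : ∀ L, 0 ≤ 2 * mass u' * (L * L) + -(u x ^ 2) * L + 2 * mass u := by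
    intro L
    rcases le_total 0 L with hL | hL
    · linarith [hu.sq_mul_le hL x]
    · have := mul_nonneg (mass_nonneg u') (mul_self_nonneg L)
      nlinarith [mass_nonneg u, mul_nonneg_of_nonpos_of_nonpos (neg_nonpos.2 (sq_nonneg (u x))) hL]
  have h := discrim_le_zero quadratic_nonneg
  rw [discrim] at h
  linarith

lemma MemH1.abs_le (hu : MemH1 u u') (x : ℝ) :
    |u x| ≤ 2 * mass u ^ (1 / 4 : ℝ) * mass u' ^ (1 / 4 : ℝ) := by
  have rpow_pow_four : ∀ t : ℝ, 0 ≤ t → (t ^ (1 / 4 : ℝ)) ^ 4 = t := fun t ht => by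
    rw [← rpow_natCast, ← rpow_mul ht]; norm_num
  have hm := mass_nonneg u
  have hm' := mass_nonneg u'
  refine le_of_pow_le_pow_left₀ four_ne_zero (by positivity) ?_
  calc |u x| ^ 4 = u x ^ 4 := Even.pow_abs (by decide) (u x)
    _ ≤ 16 * (mass u * mass u') := hu.pow_four_le x
    _ = _ := by rw [mul_pow, mul_pow, rpow_pow_four _ hm, rpow_pow_four _ hm']; ring

lemma MemH1.abs_le_of_mass_le (hu : MemH1 u u') {A B : ℝ} (hA : mass u ≤ A) (hB : mass u' ≤ B)
    (x : ℝ) : |u x| ≤ 2 * A ^ (1 / 4 : ℝ) * B ^ (1 / 4 : ℝ) := by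
  have hm := mass_nonneg u
  have hm' := mass_nonneg u'
  have hA0 := hm.trans hA
  refine (hu.abs_le x).trans ?_
  gcongr

lemma MemH1.integrable_abs_rpow (hu : MemH1 u u') {p : ℝ} (hp : 2 ≤ p) :
    Integrable fun x => |u x| ^ p :=
  (hu.memLp.integrable_sq.const_mul _).mono'
    (hu.continuous.abs.rpow_const fun _ => Or.inr (by linarith)).aestronglyMeasurable
    (Eventually.of_forall fun x => by
      rw [norm_of_nonneg (by positivity)]
      exact abs_rpow_le_mul_sq hp (hu.abs_le x))

lemma MemH1.integral_abs_rpow_le (hu : MemH1 u u') {p c : ℝ} (hp : 2 ≤ p) (hc : ∀ x, |u x| ≤ c) :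
    ∫ x, |u x| ^ p ≤ c ^ (p - 2) * mass u := by
  rw [mass, ← integral_const_mul]
  exact integral_mono (hu.integrable_abs_rpow hp) (hu.memLp.integrable_sq.const_mul _)
    fun x => abs_rpow_le_mul_sq hp (hc x)

lemma MemH1.integral_abs_rpow_pos (hu : MemH1 u u') {p x : ℝ} (hp : 2 ≤ p) (hx : u x ≠ 0) :
    0 < ∫ x, |u x| ^ p :=
  integral_pos_of_integrable_nonneg_nonzero
    (hu.continuous.abs.rpow_const fun _ => Or.inr (by linarith)) (hu.integrable_abs_rpow hp)
    (fun _ => by positivity) (x := x) (by positivity)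

lemma exists_memH1_mass_eq {μ : ℝ} (hμ : 0 < μ) :
    ∃ u u' : ℝ → ℝ, MemH1 u u' ∧ mass u = μ ∧ u 0 ≠ 0 := by
  let b : ContDiffBump (0 : ℝ) := ⟨1, 2, one_pos, one_lt_two⟩
  have hb : ContDiff ℝ 1 b := b.contDiff
  have hb' : Continuous (deriv b) := hb.continuous_deriv le_rfl
  have hbH1 : MemH1 b (deriv b) :=
    { continuous := hb.continuous
      memLp := hb.continuous.memLp_of_hasCompactSupport b.hasCompactSupport
      memLp_deriv := hb'.memLp_of_hasCompactSupport b.hasCompactSupport.deriv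
      sub_eq_integral := fun x y => (intervalIntegral.integral_deriv_eq_sub' b rfl
        (fun t _ => hb.differentiable one_ne_zero t) hb'.continuousOn).symm }
  have hb0 : b 0 ≠ 0 := (b.pos_of_mem_ball (Metric.mem_ball_self b.rOut_pos)).ne'
  have hmass : 0 < mass b := hbH1.mass_pos hb0
  refine ⟨√(μ / mass b) • ⇑b, _, hbH1.const_smul _, ?_, ?_⟩
  · rw [mass_const_smul, sq_sqrt (by positivity), div_mul_cancel₀ _ hmass.ne']
  · exact mul_ne_zero (by positivity) hb0

end SobolevSpace

section Energy

variable {p q μ : ℝ} {u u' : ℝ → ℝ}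

lemma Ffun_eq (p q : ℝ) (u u' : ℝ → ℝ) :
    Ffun p q u u' = mass u' / 2 - (∫ x, |u x| ^ p) / p - |u 0| ^ q / q := by
  simp only [Ffun, mass]
  ring

lemma Ffun_comp_add_right (p q : ℝ) (u u' : ℝ → ℝ) (y : ℝ) :
    Ffun p q (fun x => u (x + y)) (fun x => u' (x + y)) =
      mass u' / 2 - (∫ x, |u x| ^ p) / p - |u y| ^ q / q := by
  rw [Ffun_eq, mass_comp_add_right, integral_add_right_eq_self (fun x => |u x| ^ p), zero_add]

lemma Ffun_const_smul (p q : ℝ) (u u' : ℝ → ℝ) {s : ℝ} (hs : 0 ≤ s) :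
    Ffun p q (s • u) (s • u') =
      s ^ 2 * mass u' / 2 - s ^ p * (∫ x, |u x| ^ p) / p - s ^ q * |u 0| ^ q / q := by
  rw [Ffun_eq, mass_const_smul]
  simp only [Pi.smul_apply, smul_eq_mul, abs_mul, abs_of_nonneg hs, mul_rpow hs (abs_nonneg _),
    integral_const_mul]

lemma Ffun_nonneg_of_forall_eq_zero (hp : p ≠ 0) (hq : q ≠ 0) (hu : ∀ x, u x = 0) :
    0 ≤ Ffun p q u u' := by
  rw [Ffun_eq]
  simpa [hu, zero_rpow hp, zero_rpow hq] using div_nonneg (mass_nonneg u') zero_le_two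

-- By Gagliardo–Nirenberg the potential terms are `O(D ^ ((p - 2) / 4))` and `O(D ^ (q / 4))` in
-- `D = mass u'`, and both exponents are below `1`.
lemma exists_mass_deriv_le (hp : 2 ≤ p) (hp' : p < 6) (hq : 0 < q) (hq' : q < 4) (hμ : 0 ≤ μ) :
    ∃ C, ∀ u u', MemH1 u u' → mass u = μ → mass u' ≤ 4 * Ffun p q u u' + C := by
  set c := 2 * μ ^ (1 / 4 : ℝ)
  obtain ⟨C₁, hC₁⟩ := exists_mul_rpow_le_add (α := (p - 2) / 4) (A := c ^ (p - 2) * μ / p)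
    (ε := 1 / 8) (by linarith) (by linarith) (by positivity) (by norm_num)
  obtain ⟨C₂, hC₂⟩ := exists_mul_rpow_le_add (α := q / 4) (A := c ^ q / q)
    (ε := 1 / 8) (by linarith) (by linarith) (by positivity) (by norm_num)
  refine ⟨4 * (C₁ + C₂), fun u u' hu hm => ?_⟩
  have hD := mass_nonneg u'
  have abs_le : ∀ x, |u x| ≤ c * mass u' ^ (1 / 4 : ℝ) := fun x => by
    simpa only [hm] using hu.abs_le x
  have sup_rpow : ∀ r : ℝ, (c * mass u' ^ (1 / 4 : ℝ)) ^ r = c ^ r * mass u' ^ (r / 4) := by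
    intro r
    rw [mul_rpow (by positivity) (by positivity), ← rpow_mul hD]
    ring_nf
  have bulk : (∫ x, |u x| ^ p) / p ≤ 1 / 8 * mass u' + C₁ :=
    calc (∫ x, |u x| ^ p) / p
        ≤ (c * mass u' ^ (1 / 4 : ℝ)) ^ (p - 2) * μ / p := by
          gcongr
          simpa only [hm] using hu.integral_abs_rpow_le hp abs_le
      _ = c ^ (p - 2) * μ / p * mass u' ^ ((p - 2) / 4) := by rw [sup_rpow]; ring
      _ ≤ _ := hC₁ _ hD
  have point : |u 0| ^ q / q ≤ 1 / 8 * mass u' + C₂ :=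
    calc |u 0| ^ q / q ≤ (c * mass u' ^ (1 / 4 : ℝ)) ^ q / q := by gcongr; exact abs_le 0
      _ = c ^ q / q * mass u' ^ (q / 4) := by rw [sup_rpow]; ring
      _ ≤ _ := hC₂ _ hD
  rw [Ffun_eq]
  linarith

/-- The values of `F_{p,q}` on the functions of `H¹(ℝ)` with mass `μ`. -/
def energyValues (p q μ : ℝ) : Set ℝ :=
  {e | ∃ u u', MemH1 u u' ∧ mass u = μ ∧ Ffun p q u u' = e}

/-- The ground state energy level of `F_{p,q}` at mass `μ`, the infimum of `energyValues`. As an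
infimum of reals it is meaningful only where that set is nonempty and bounded below. -/
def groundEnergy (p q μ : ℝ) : ℝ := sInf (energyValues p q μ)

lemma bddBelow_energyValues (hp : 2 ≤ p) (hp' : p < 6) (hq : 0 < q) (hq' : q < 4) (hμ : 0 ≤ μ) :
    BddBelow (energyValues p q μ) := by
  obtain ⟨C, hC⟩ := exists_mass_deriv_le hp hp' hq hq' hμ
  refine ⟨-C / 4, ?_⟩
  rintro _ ⟨u, u', hu, hm, rfl⟩
  linarith [hC u u' hu hm, mass_nonneg u']

lemma MemH1.groundEnergy_le (hu : MemH1 u u') (hp : 2 ≤ p) (hp' : p < 6) (hq : 0 < q)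
    (hq' : q < 4) : groundEnergy p q (mass u) ≤ Ffun p q u u' :=
  csInf_le (bddBelow_energyValues hp hp' hq hq' (mass_nonneg u)) ⟨u, u', hu, rfl, rfl⟩

lemma mass_sqrt_smul_comp_mul_left (u : ℝ → ℝ) {s : ℝ} (hs : 0 < s) :
    mass (√s • fun x => u (s * x)) = mass u := by
  rw [mass_const_smul, mass_comp_mul_left, sq_sqrt hs.le, abs_of_pos (inv_pos.2 hs),
    mul_inv_cancel_left₀ hs.ne']

lemma Ffun_sqrt_smul_comp_mul_left_le (hp : 0 ≤ p) (q : ℝ) (u u' : ℝ → ℝ) {s : ℝ} (hs : 0 < s) :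
    Ffun p q (√s • fun x => u (s * x)) (√s • fun x => s * u' (s * x)) ≤
      s ^ 2 * (mass u' / 2) - s ^ (q / 2) * (|u 0| ^ q / q) := by
  have kinetic : mass (√s • fun x => s * u' (s * x)) = s ^ 2 * mass u' := by
    change mass (√s • fun x => (s • u') (s * x)) = _
    rw [mass_sqrt_smul_comp_mul_left _ hs, mass_const_smul]
  have bulk : 0 ≤ (∫ x, |(√s • fun x => u (s * x)) x| ^ p) / p := by positivity
  have point : |(√s • fun x => u (s * x)) 0| ^ q = s ^ (q / 2) * |u 0| ^ q := by
    rw [Pi.smul_apply, smul_eq_mul, mul_zero, abs_mul, abs_of_nonneg (sqrt_nonneg s),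
      mul_rpow (sqrt_nonneg s) (abs_nonneg _), sqrt_eq_rpow, ← rpow_mul hs.le, one_div_mul_eq_div]
  rw [Ffun_eq, kinetic, point]
  linear_combination bulk

-- Along the mass-preserving dilations `√s * u (s * x)` the kinetic term is of order `s ^ 2`, and
-- the point term of the larger order `s ^ (q / 2)` as `s → 0`.
lemma exists_Ffun_neg (hp : 0 ≤ p) (hq : 0 < q) (hq' : q < 4) (hμ : 0 < μ) :
    ∃ u u', MemH1 u u' ∧ mass u = μ ∧ Ffun p q u u' < 0 := by
  obtain ⟨u, u', hu, hm, hu0⟩ := exists_memH1_mass_eq hμ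
  have hpoint : 0 < |u 0| ^ q / q := by positivity
  have ratio_lim : Tendsto (fun s : ℝ => s ^ (2 - q / 2) * (mass u' / 2)) (𝓝[>] 0) (𝓝 0) := by
    have h : Tendsto (fun s : ℝ => s ^ (2 - q / 2)) (𝓝 0) (𝓝 (0 ^ (2 - q / 2))) :=
      (continuous_rpow_const (by linarith)).tendsto 0
    rw [zero_rpow (by linarith)] at h
    simpa only [zero_mul] using (h.mono_left nhdsWithin_le_nhds).mul_const (mass u' / 2)
  obtain ⟨s, hlt, hs⟩ :=
    ((ratio_lim.eventually_lt_const hpoint).and self_mem_nhdsWithin).exists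
  have hs0 : 0 < s := hs
  have rpow_split : s ^ (q / 2) * s ^ (2 - q / 2) = s ^ 2 := by
    rw [← rpow_add hs0, add_sub_cancel, rpow_two]
  refine ⟨_, _, (hu.comp_mul_left hs0.ne').const_smul √s,
    (mass_sqrt_smul_comp_mul_left u hs0).trans hm, ?_⟩
  calc Ffun p q (√s • fun x => u (s * x)) (√s • fun x => s * u' (s * x))
      ≤ s ^ 2 * (mass u' / 2) - s ^ (q / 2) * (|u 0| ^ q / q) :=
        Ffun_sqrt_smul_comp_mul_left_le hp q u u' hs0
    _ = s ^ (q / 2) * (s ^ (2 - q / 2) * (mass u' / 2) - |u 0| ^ q / q) := by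
        rw [mul_sub, ← mul_assoc, rpow_split]
    _ < 0 := mul_neg_of_pos_of_neg (by positivity) (sub_neg.2 hlt)

lemma groundEnergy_neg (hp : 2 ≤ p) (hp' : p < 6) (hq : 0 < q) (hq' : q < 4) (hμ : 0 < μ) :
    groundEnergy p q μ < 0 := by
  obtain ⟨u, u', hu, rfl, hneg⟩ := exists_Ffun_neg (zero_le_two.trans hp) hq hq' hμ
  exact (hu.groundEnergy_le hp hp' hq hq').trans_lt hneg

lemma sq_le_rpow {s r : ℝ} (hs : 1 ≤ s) (hr : 2 ≤ r) : s ^ 2 ≤ s ^ r := by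
  rw [← rpow_two]
  exact rpow_le_rpow_of_exponent_le hs hr

lemma Ffun_const_smul_le (hp : 2 ≤ p) (hq : 2 ≤ q) {s : ℝ} (hs : 1 ≤ s) :
    Ffun p q (s • u) (s • u') ≤ s ^ 2 * Ffun p q u u' := by
  have hbulk : 0 ≤ (∫ x, |u x| ^ p) / p := by positivity
  have hpoint : 0 ≤ |u 0| ^ q / q := by positivity
  rw [Ffun_const_smul _ _ _ _ (zero_le_one.trans hs), Ffun_eq]
  linear_combination mul_le_mul_of_nonneg_right (sq_le_rpow hs hp) hbulk +
    mul_le_mul_of_nonneg_right (sq_le_rpow hs hq) hpoint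

lemma MemH1.Ffun_const_smul_lt (hu : MemH1 u u') {x : ℝ} (hx : u x ≠ 0) (hp : 2 < p) (hq : 2 ≤ q)
    {s : ℝ} (hs : 1 < s) : Ffun p q (s • u) (s • u') < s ^ 2 * Ffun p q u u' := by
  have hbulk : 0 < (∫ x, |u x| ^ p) / p := div_pos (hu.integral_abs_rpow_pos hp.le hx) (by linarith)
  have hpoint : 0 ≤ |u 0| ^ q / q := by positivity
  have sq_lt_rpow : s ^ 2 < s ^ p := by
    rw [← rpow_two]
    exact rpow_lt_rpow_of_exponent_lt hs hp
  rw [Ffun_const_smul _ _ _ _ (zero_le_one.trans hs.le), Ffun_eq]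
  linear_combination mul_lt_mul_of_pos_right sq_lt_rpow hbulk +
    mul_le_mul_of_nonneg_right (sq_le_rpow hs.le hq) hpoint

lemma MemH1.groundEnergy_le_Ffun_smul (hu : MemH1 u u') (hm : 0 < mass u) (hμ : 0 ≤ μ) (hp : 2 ≤ p)
    (hp' : p < 6) (hq : 0 < q) (hq' : q < 4) :
    groundEnergy p q μ ≤ Ffun p q (√(μ / mass u) • u) (√(μ / mass u) • u') := by
  have hmass : mass (√(μ / mass u) • u) = μ := by
    rw [mass_const_smul, sq_sqrt (by positivity), div_mul_cancel₀ _ hm.ne']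
  simpa only [hmass] using (hu.const_smul √(μ / mass u)).groundEnergy_le hp hp' hq hq'

lemma MemH1.mass_mul_groundEnergy_le (hu : MemH1 u u') (hm : mass u ≤ μ) (hp : 2 ≤ p) (hp' : p < 6)
    (hq : 2 ≤ q) (hq' : q < 4) : mass u * groundEnergy p q μ ≤ μ * Ffun p q u u' := by
  have hμ : 0 ≤ μ := (mass_nonneg u).trans hm
  rcases (mass_nonneg u).eq_or_lt with hm0 | hm0
  · have hu0 : ∀ x, u x = 0 := fun x => by
      by_contra hx
      exact (hu.mass_pos hx).ne hm0
    rw [← hm0, zero_mul]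
    exact mul_nonneg hμ (Ffun_nonneg_of_forall_eq_zero (by linarith) (by linarith) hu0)
  have hs : 1 ≤ √(μ / mass u) := one_le_sqrt.2 ((one_le_div hm0).2 hm)
  calc mass u * groundEnergy p q μ
      ≤ mass u * (√(μ / mass u) ^ 2 * Ffun p q u u') := by
        gcongr
        exact (hu.groundEnergy_le_Ffun_smul hm0 hμ hp hp' (by linarith) hq').trans
          (Ffun_const_smul_le hp hq hs)
    _ = μ * Ffun p q u u' := by
        rw [sq_sqrt (by positivity)]
        field_simp

lemma MemH1.mass_mul_groundEnergy_lt (hu : MemH1 u u') {x : ℝ} (hx : u x ≠ 0) (hm : mass u < μ)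
    (hp : 2 < p) (hp' : p < 6) (hq : 2 ≤ q) (hq' : q < 4) :
    mass u * groundEnergy p q μ < μ * Ffun p q u u' := by
  have hm0 := hu.mass_pos hx
  have hs : 1 < √(μ / mass u) := (lt_sqrt zero_le_one).2 (by rwa [one_pow, one_lt_div hm0])
  calc mass u * groundEnergy p q μ
      < mass u * (√(μ / mass u) ^ 2 * Ffun p q u u') := by
        gcongr
        exact (hu.groundEnergy_le_Ffun_smul hm0 (hm0.trans hm).le hp.le hp' (by linarith)
          hq').trans_lt (hu.Ffun_const_smul_lt hx hp hq hs)
    _ = μ * Ffun p q u u' := by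
        rw [sq_sqrt (by positivity [hm0.trans hm])]
        field_simp

lemma MemH1.exists_abs_le_two_mul_abs (hu : MemH1 u u') :
    ∃ y, |u 0| ≤ |u y| ∧ ∀ x, |u x| ≤ 2 * |u y| := by
  by_cases h0 : ∀ x, |u x| ≤ 2 * |u 0|
  · exact ⟨0, le_rfl, h0⟩
  push Not at h0
  obtain ⟨x₀, hx₀⟩ := h0
  have bdd : BddAbove (range fun x => |u x|) := ⟨_, forall_mem_range.2 hu.abs_le⟩
  have hsup : 2 * |u 0| < ⨆ x, |u x| := hx₀.trans_le (le_ciSup bdd x₀)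
  obtain ⟨y, hy⟩ := exists_lt_of_lt_ciSup
    (half_lt_self ((by positivity : 0 ≤ 2 * |u 0|).trans_lt hsup))
  exact ⟨y, by linarith, fun x => (le_ciSup bdd x).trans (by linarith)⟩

lemma MemH1.exists_recentered (hu : MemH1 u u') (p : ℝ) (hq : 0 ≤ q) :
    ∃ v v', MemH1 v v' ∧ mass v = mass u ∧ Ffun p q v v' ≤ Ffun p q u u' ∧
      ∀ x, |v x| ≤ 2 * |v 0| := by
  obtain ⟨y, hy, hsup⟩ := hu.exists_abs_le_two_mul_abs
  refine ⟨_, _, hu.comp_add_right y, mass_comp_add_right u y, ?_, fun x => ?_⟩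
  · rw [Ffun_comp_add_right, Ffun_eq]
    gcongr
  · simpa only [zero_add] using hsup (x + y)

lemma MemH1.neg_le_Ffun (hu : MemH1 u u') (hp : 2 ≤ p) {c : ℝ} (hc : ∀ x, |u x| ≤ c) :
    -(c ^ (p - 2) * mass u / p + |u 0| ^ q / q) ≤ Ffun p q u u' := by
  have hbulk : (∫ x, |u x| ^ p) / p ≤ c ^ (p - 2) * mass u / p := by
    gcongr
    exact hu.integral_abs_rpow_le hp hc
  rw [Ffun_eq]
  linarith [mass_nonneg u']

lemma exists_recentered_minimizing_seq (hp : 2 ≤ p) (hp' : p < 6) (hq : 0 < q) (hq' : q < 4)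
    (hμ : 0 < μ) :
    ∃ u u' : ℕ → ℝ → ℝ, (∀ n, MemH1 (u n) (u' n)) ∧ (∀ n, mass (u n) = μ) ∧
      (∀ n x, |u n x| ≤ 2 * |u n 0|) ∧
      Tendsto (fun n => Ffun p q (u n) (u' n)) atTop (𝓝 (groundEnergy p q μ)) := by
  obtain ⟨w, w', hw, hmw, -⟩ := exists_Ffun_neg (p := p) (by linarith) hq hq' hμ
  obtain ⟨e, -, he_lim, he⟩ := exists_seq_tendsto_sInf (S := energyValues p q μ)
    ⟨_, w, w', hw, hmw, rfl⟩ (bddBelow_energyValues hp hp' hq hq' hμ.le)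
  have recentered : ∀ n, ∃ u u', MemH1 u u' ∧ mass u = μ ∧ Ffun p q u u' ≤ e n ∧
      ∀ x, |u x| ≤ 2 * |u 0| := fun n => by
    obtain ⟨v, v', hv, rfl, hFv⟩ := he n
    rw [← hFv]
    exact hv.exists_recentered p hq.le
  choose u u' hu hm hF hsup using recentered
  refine ⟨u, u', hu, hm, hsup, tendsto_of_tendsto_of_tendsto_of_le_of_le tendsto_const_nhds he_lim
    (fun n => ?_) hF⟩
  simpa only [hm] using (hu n).groundEnergy_le hp hp' hq hq'

end Energy

section Compactness

lemma integrable_of_tendsto_of_integral_norm_le {α E : Type*} [MeasurableSpace α] {μ : Measure α}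
    [NormedAddCommGroup E] {f : ℕ → α → E} {g : α → E} {B : ℝ} (hf : ∀ n, Integrable (f n) μ)
    (hB : ∀ n, ∫ x, ‖f n x‖ ∂μ ≤ B) (hlim : ∀ᵐ x ∂μ, Tendsto (f · x) atTop (𝓝 (g x))) :
    Integrable g μ := by
  have eLpNorm_le : ∀ n, eLpNorm (f n) 1 μ ≤ ENNReal.ofReal B := fun n => by
    rw [eLpNorm_one_eq_lintegral_enorm, ← ofReal_integral_norm_eq_lintegral_enorm (hf n)]
    exact ENNReal.ofReal_le_ofReal (hB n)
  refine memLp_one_iff_integrable.1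
    ⟨aestronglyMeasurable_of_tendsto_ae atTop (fun n => (hf n).1) hlim, ?_⟩
  calc eLpNorm g 1 μ ≤ liminf (fun n => eLpNorm (f n) 1 μ) atTop :=
        Lp.eLpNorm_lim_le_liminf_eLpNorm (fun n => (hf n).1) g hlim
    _ ≤ ENNReal.ofReal B :=
        liminf_le_of_frequently_le' (Eventually.of_forall eLpNorm_le).frequently
    _ < ⊤ := ENNReal.ofReal_lt_top

/-- Weak convergence in `H¹(ℝ)` of `u n`, with derivatives `u' n`, to `v`, with derivative `v'`:
pointwise convergence, and weak convergence of the derivatives in `L²`. For sequences bounded in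
`H¹(ℝ)` this is equivalent to weak convergence against the dual. -/
structure TendstoWeakH1 (u u' : ℕ → ℝ → ℝ) (v v' : ℝ → ℝ) : Prop where
  tendsto_apply : ∀ x, Tendsto (u · x) atTop (𝓝 (v x))
  tendsto_integral_deriv_mul : ∀ h : ℝ → ℝ, MemLp h 2 →
    Tendsto (fun n => ∫ x, u' n x * h x) atTop (𝓝 (∫ x, v' x * h x))

variable {u u' : ℕ → ℝ → ℝ} {v v' : ℝ → ℝ} {A B p q : ℝ}

lemma tendsto_intervalIntegral_of_tendsto_integral_mul {f : ℕ → ℝ → ℝ} {g : ℝ → ℝ} {μ : Measure ℝ}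
    [IsLocallyFiniteMeasure μ] (hlim : ∀ h, MemLp h 2 μ →
      Tendsto (fun n => ∫ x, f n x * h x ∂μ) atTop (𝓝 (∫ x, g x * h x ∂μ))) (a b : ℝ) :
    Tendsto (fun n => ∫ x in a..b, f n x ∂μ) atTop (𝓝 (∫ x in a..b, g x ∂μ)) := by
  have on_Ioc : ∀ a b, Tendsto (fun n => ∫ x in Ioc a b, f n x ∂μ) atTop
      (𝓝 (∫ x in Ioc a b, g x ∂μ)) := fun a b => by
    simpa only [integral_mul_indicator_one measurableSet_Ioc] using
      hlim _ (memLp_indicator_one measurableSet_Ioc measure_Ioc_lt_top.ne)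
  exact (on_Ioc a b).sub (on_Ioc b a)

lemma exists_subseq_tendstoWeakH1 (hu : ∀ n, MemH1 (u n) (u' n)) (hA : ∀ n, mass (u n) ≤ A)
    (hB : ∀ n, mass (u' n) ≤ B) :
    ∃ (v v' : ℝ → ℝ) (φ : ℕ → ℕ), MemH1 v v' ∧ StrictMono φ ∧
      TendstoWeakH1 (u ∘ φ) (u' ∘ φ) v v' := by
  have bdd_zero : ∀ n, u n 0 ∈ Metric.closedBall (0 : ℝ) (2 * A ^ (1 / 4 : ℝ) * B ^ (1 / 4 : ℝ)) :=
    fun n => mem_closedBall_zero_iff.2 ((hu n).abs_le_of_mass_le (hA n) (hB n) 0)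
  obtain ⟨c, -, φ, hφ, hc⟩ := tendsto_subseq_of_bounded Metric.isBounded_closedBall bdd_zero
  obtain ⟨v', ψ, hv', hψ, hweak⟩ :=
    exists_subseq_tendsto_integral_mul (fun n => (hu (φ n)).memLp_deriv) fun n => hB (φ n)
  have int_v' : ∀ a b, IntervalIntegrable v' volume a b := fun a b =>
    ((hv'.locallyIntegrable one_le_two).integrableOn_isCompact isCompact_uIcc).intervalIntegrable
  let v : ℝ → ℝ := fun x => c + ∫ t in 0..x, v' t
  have pointwise : ∀ x, Tendsto (fun n => u (φ (ψ n)) x) atTop (𝓝 (v x)) := fun x => by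
    refine ((hc.comp hψ.tendsto_atTop).add
      (tendsto_intervalIntegral_of_tendsto_integral_mul hweak 0 x)).congr fun n => ?_
    rw [← (hu _).sub_eq_integral]
    exact add_sub_cancel _ _
  have hcont : Continuous v :=
    continuous_const.add (intervalIntegral.continuous_primitive int_v' 0)
  have int_sq : Integrable fun x => v x ^ 2 :=
    integrable_of_tendsto_of_integral_norm_le (fun n => (hu (φ (ψ n))).memLp.integrable_sq)
      (fun n => by simpa only [mass, norm_pow, norm_eq_abs, sq_abs] using hA (φ (ψ n)))
      (Eventually.of_forall fun x => (pointwise x).pow 2)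
  refine ⟨v, v', φ ∘ ψ, ⟨hcont, (memLp_two_iff_integrable_sq hcont.aestronglyMeasurable).2 int_sq,
    hv', fun a b => ?_⟩, hφ.comp hψ, ⟨pointwise, hweak⟩⟩
  rw [add_sub_add_left_eq_sub, intervalIntegral.integral_interval_sub_left (int_v' _ _)
    (int_v' _ _)]

lemma TendstoWeakH1.tendsto_integral_abs_rpow_sub (h : TendstoWeakH1 u u' v v')
    (hu : ∀ n, MemH1 (u n) (u' n)) (hv : MemH1 v v') (hp : 2 ≤ p)
    (hB : ∀ n, ∫ x, |u n x| ^ p ≤ B) :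
    Tendsto (fun n => (∫ x, |u n x| ^ p) - ∫ x, |(u n - v) x| ^ p) atTop (𝓝 (∫ x, |v x| ^ p)) :=
  tendsto_integral_norm_rpow_sub_norm_sub_rpow (one_le_two.trans hp)
    (fun n => (hu n).continuous.aestronglyMeasurable) hv.continuous.aestronglyMeasurable
    (fun n => (hu n).integrable_abs_rpow hp) (hv.integrable_abs_rpow hp) hB
    (Eventually.of_forall h.tendsto_apply)

lemma TendstoWeakH1.tendsto_mass_sub (h : TendstoWeakH1 u u' v v') (hu : ∀ n, MemH1 (u n) (u' n))
    (hv : MemH1 v v') (hA : ∀ n, mass (u n) ≤ A) :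
    Tendsto (fun n => mass (u n) - mass (u n - v)) atTop (𝓝 (mass v)) := by
  simpa only [mass, rpow_two, sq_abs] using
    h.tendsto_integral_abs_rpow_sub hu hv le_rfl (by simpa only [mass, rpow_two, sq_abs] using hA)

lemma TendstoWeakH1.tendsto_mass_deriv_sub (h : TendstoWeakH1 u u' v v')
    (hu : ∀ n, MemH1 (u n) (u' n)) (hv : MemH1 v v') :
    Tendsto (fun n => mass (u' n) - mass (u' n - v')) atTop (𝓝 (mass v')) := by
  have lim := ((h.tendsto_integral_deriv_mul v' hv.memLp_deriv).const_mul 2).sub_const (mass v')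
  have self_mul : ∫ x, v' x * v' x = mass v' := by simp only [mass, sq]
  rw [self_mul, two_mul, add_sub_cancel_right] at lim
  refine lim.congr fun n => ?_
  have int_mul : Integrable fun x => 2 * (u' n x * v' x) :=
    ((hu n).memLp_deriv.integrable_mul hv.memLp_deriv).const_mul 2
  have expand : mass (u' n - v') = mass (u' n) - 2 * (∫ x, u' n x * v' x) + mass v' :=
    calc mass (u' n - v') = ∫ x, (u' n x ^ 2 - 2 * (u' n x * v' x) + v' x ^ 2) := by
          refine integral_congr_ae (Eventually.of_forall fun x => ?_)
          simp only [Pi.sub_apply]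
          ring
      _ = _ := by
          rw [integral_add ((hu n).memLp_deriv.integrable_sq.sub' int_mul)
            hv.memLp_deriv.integrable_sq, integral_sub (hu n).memLp_deriv.integrable_sq int_mul,
            integral_const_mul]
          rfl
  linarith

lemma TendstoWeakH1.tendsto_Ffun_sub (h : TendstoWeakH1 u u' v v') (hu : ∀ n, MemH1 (u n) (u' n))
    (hv : MemH1 v v') (hp : 2 ≤ p) (hq : 0 < q) (hB : ∀ n, ∫ x, |u n x| ^ p ≤ B) :
    Tendsto (fun n => Ffun p q (u n) (u' n) - Ffun p q (u n - v) (u' n - v')) atTop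
      (𝓝 (Ffun p q v v')) := by
  have point_sub : Tendsto (fun n => |(u n - v) 0| ^ q) atTop (𝓝 0) := by
    have h0 : Tendsto (fun n => |(u n - v) 0|) atTop (𝓝 0) := by
      simpa using ((h.tendsto_apply 0).sub_const (v 0)).abs
    simpa only [zero_rpow hq.ne'] using h0.rpow_const (p := q) (Or.inr hq.le)
  have point : Tendsto (fun n => |u n 0| ^ q - |(u n - v) 0| ^ q) atTop (𝓝 (|v 0| ^ q)) := by
    simpa only [sub_zero] using
      ((h.tendsto_apply 0).abs.rpow_const (p := q) (Or.inr hq.le)).sub point_sub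
  simp only [Ffun_eq]
  refine ((((h.tendsto_mass_deriv_sub hu hv).div_const 2).sub
    ((h.tendsto_integral_abs_rpow_sub hu hv hp hB).div_const p)).sub (point.div_const q)).congr
    fun n => ?_
  ring

end Compactness

section GroundState

variable {p q μ B : ℝ} {u u' : ℕ → ℝ → ℝ} {v v' : ℝ → ℝ}

lemma exists_mass_deriv_le_of_tendsto_Ffun {E : ℝ} (hu : ∀ n, MemH1 (u n) (u' n))
    (hm : ∀ n, mass (u n) = μ) (hF : Tendsto (fun n => Ffun p q (u n) (u' n)) atTop (𝓝 E))
    (hp : 2 ≤ p) (hp' : p < 6) (hq : 0 < q) (hq' : q < 4) : ∃ B, ∀ n, mass (u' n) ≤ B := by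
  have hμ : 0 ≤ μ := hm 0 ▸ mass_nonneg (u 0)
  obtain ⟨C, hC⟩ := exists_mass_deriv_le hp hp' hq hq' hμ
  obtain ⟨M, hM⟩ := hF.bddAbove_range
  exact ⟨4 * M + C, fun n => by linarith [hC _ _ (hu n) (hm n), hM (mem_range_self n)]⟩

lemma exists_integral_abs_rpow_le (hu : ∀ n, MemH1 (u n) (u' n)) (hm : ∀ n, mass (u n) = μ)
    (hB : ∀ n, mass (u' n) ≤ B) (hp : 2 ≤ p) : ∃ K, ∀ n, ∫ x, |u n x| ^ p ≤ K := by
  refine ⟨(2 * μ ^ (1 / 4 : ℝ) * B ^ (1 / 4 : ℝ)) ^ (p - 2) * μ, fun n => ?_⟩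
  simpa only [hm] using
    (hu n).integral_abs_rpow_le hp fun x => (hu n).abs_le_of_mass_le (hm n).le (hB n) x

-- A vanishing limit at `0` makes the recentered sequence tend to `0` uniformly, and with it both
-- potential terms.
lemma nonneg_of_tendsto_Ffun_of_tendsto_zero {E : ℝ} (hu : ∀ n, MemH1 (u n) (u' n))
    (hm : ∀ n, mass (u n) = μ) (hsup : ∀ n x, |u n x| ≤ 2 * |u n 0|)
    (hF : Tendsto (fun n => Ffun p q (u n) (u' n)) atTop (𝓝 E))
    (h0 : Tendsto (fun n => u n 0) atTop (𝓝 0)) (hp : 2 < p) (hq : 0 < q) : 0 ≤ E := by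
  have abs_lim : Tendsto (fun n => |u n 0|) atTop (𝓝 0) := by simpa using h0.abs
  have bulk_lim : Tendsto (fun n => (2 * |u n 0|) ^ (p - 2) * μ / p) atTop (𝓝 0) := by
    simpa [zero_rpow (sub_pos.2 hp).ne'] using
      (((abs_lim.const_mul 2).rpow_const (Or.inr (sub_pos.2 hp).le)).mul_const μ).div_const p
  have point_lim : Tendsto (fun n => |u n 0| ^ q / q) atTop (𝓝 0) := by
    simpa [zero_rpow hq.ne'] using (abs_lim.rpow_const (Or.inr hq.le)).div_const q
  have lower_lim := (bulk_lim.add point_lim).neg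
  rw [add_zero, neg_zero] at lower_lim
  refine le_of_tendsto_of_tendsto' lower_lim hF fun n => ?_
  simpa only [hm] using (hu n).neg_le_Ffun (q := q) hp.le (hsup n)

lemma TendstoWeakH1.mass_le (h : TendstoWeakH1 u u' v v') (hu : ∀ n, MemH1 (u n) (u' n))
    (hv : MemH1 v v') (hm : ∀ n, mass (u n) = μ) : mass v ≤ μ :=
  le_of_tendsto' (h.tendsto_mass_sub hu hv fun n => (hm n).le) fun n => by
    linarith [hm n, mass_nonneg (u n - v)]

lemma TendstoWeakH1.mul_Ffun_le (h : TendstoWeakH1 u u' v v') (hu : ∀ n, MemH1 (u n) (u' n))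
    (hv : MemH1 v v') (hm : ∀ n, mass (u n) = μ)
    (hF : Tendsto (fun n => Ffun p q (u n) (u' n)) atTop (𝓝 (groundEnergy p q μ)))
    {x : ℝ} (hx : v x ≠ 0) (hp : 2 ≤ p) (hp' : p < 6) (hq : 2 ≤ q) (hq' : q < 4) :
    μ * Ffun p q v v' ≤ mass v * groundEnergy p q μ := by
  have hq0 : 0 < q := by linarith
  obtain ⟨B, hB⟩ := exists_mass_deriv_le_of_tendsto_Ffun hu hm hF hp hp' hq0 hq'
  obtain ⟨K, hK⟩ := exists_integral_abs_rpow_le hu hm hB hp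
  have mass_lim : Tendsto (fun n => mass (u n - v)) atTop (𝓝 (μ - mass v)) := by
    simpa only [hm, sub_sub_cancel] using
      (h.tendsto_mass_sub hu hv fun n => (hm n).le).const_sub μ
  have energy_lim : Tendsto (fun n => Ffun p q (u n - v) (u' n - v')) atTop
      (𝓝 (groundEnergy p q μ - Ffun p q v v')) := by
    simpa only [sub_sub_cancel] using hF.sub (h.tendsto_Ffun_sub hu hv hp hq0 hK)
  have remainder_mass_lt : ∀ᶠ n in atTop, mass (u n - v) < μ :=
    mass_lim.eventually_lt_const (sub_lt_self μ (hv.mass_pos hx))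
  have remainder_le : (μ - mass v) * groundEnergy p q μ ≤
      μ * (groundEnergy p q μ - Ffun p q v v') := by
    refine le_of_tendsto_of_tendsto (mass_lim.mul_const _) (energy_lim.const_mul μ) ?_
    filter_upwards [remainder_mass_lt] with n hn
    exact ((hu n).sub hv).mass_mul_groundEnergy_le hn.le hp hp' hq hq'
  linarith

lemma exists_Ffun_le_groundEnergy (hp : 2 < p) (hp' : p < 6) (hq : 2 ≤ q) (hq' : q < 4)
    (hμ : 0 < μ) : ∃ v v', MemH1 v v' ∧ mass v = μ ∧ Ffun p q v v' ≤ groundEnergy p q μ := by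
  have hq0 : 0 < q := by linarith
  obtain ⟨u, u', hu, hm, hsup, hF⟩ := exists_recentered_minimizing_seq hp.le hp' hq0 hq' hμ
  obtain ⟨B, hB⟩ := exists_mass_deriv_le_of_tendsto_Ffun hu hm hF hp.le hp' hq0 hq'
  obtain ⟨v, v', φ, hv, hφ, hweak⟩ := exists_subseq_tendstoWeakH1 hu (fun n => (hm n).le) hB
  have hFφ := hF.comp hφ.tendsto_atTop
  have hv0 : v 0 ≠ 0 := fun hv0 => by
    have h0 := hweak.tendsto_apply 0
    rw [hv0] at h0
    exact (groundEnergy_neg hp.le hp' hq0 hq' hμ).not_ge <|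
      nonneg_of_tendsto_Ffun_of_tendsto_zero (fun n => hu (φ n)) (fun n => hm (φ n))
        (fun n => hsup (φ n)) hFφ h0 hp hq0
  have hle : μ * Ffun p q v v' ≤ mass v * groundEnergy p q μ :=
    hweak.mul_Ffun_le (fun n => hu (φ n)) hv (fun n => hm (φ n)) hFφ hv0 hp.le hp' hq hq'
  have hmass : mass v = μ :=
    (hweak.mass_le (fun n => hu (φ n)) hv fun n => hm (φ n)).antisymm <| not_lt.1 fun hlt =>
      (hv.mass_mul_groundEnergy_lt hv0 hlt hp hp' hq hq').not_ge hle
  rw [hmass] at hle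
  exact ⟨v, v', hv, hmass, le_of_mul_le_mul_left hle hμ⟩

end GroundState

theorem stmt7_general (p q μ : ℝ) (hp : 2 < p) (hp' : p < 6) (hq : 2 ≤ q) (hq' : q < 4)
    (hμ : 0 < μ) :
    ∃ u u' : ℝ → ℝ, IsH1 u u' ∧ mass u = μ ∧
      ∀ v v' : ℝ → ℝ, IsH1 v v' → mass v = μ → Ffun p q u u' ≤ Ffun p q v v' := by
  obtain ⟨u, u', hu, hm, hE⟩ := exists_Ffun_le_groundEnergy hp hp' hq hq' hμ
  refine ⟨u, u', hu.isH1, hm, fun v v' hv hmv => hE.trans ?_⟩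
  have hvH1 : MemH1 v v' := hv.memH1 (hmv.trans_ne hμ.ne')
  simpa only [hmv] using hvH1.groundEnergy_le hp.le hp' (by linarith) hq'

theorem stmt7 (p q μ : ℝ) (hp : 2 < p) (hp' : p < 6) (hq : 2 < q) (hq' : q < 4)
    (hμ : 0 < μ) :
    ∃ u u' : ℝ → ℝ, IsH1 u u' ∧ mass u = μ ∧
      ∀ v v' : ℝ → ℝ, IsH1 v v' → mass v = μ → Ffun p q u u' ≤ Ffun p q v v' :=
  stmt7_general p q μ hp hp' hq.le hq' hμ
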